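/- For every integer t ≥ 2, if L = 2^{2^t + 1} − 2, then M_S(L,3) = (L + 2)/8. -/

import Mathlib

open Finset

/-- The set of differences of a codeword `I ⊆ ℤ_L`. -/
def dset {L : ℕ} (I : Finset (ZMod L)) : Finset (ZMod L) :=
  (I ×ˢ I).image fun p => p.1 - p.2

/-- The set of nonzero differences. -/
def dstar {L : ℕ} (I : Finset (ZMod L)) : Finset (ZMod L) := dset I \ {0}

/-- The set of shifted nonzero differences `d⁺(I) = d*(I) ∪ (d*(I)+1)`. -/
def dplus {L : ℕ} (I : Finset (ZMod L)) : Finset (ZMod L) :=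
  dstar I ∪ (dstar I).image (· + 1)

/-- A strongly conflict-avoiding code of length `L` and weight `ω`. -/
def IsSCAC (L ω : ℕ) (C : Finset (Finset (ZMod L))) : Prop :=
  (∀ I ∈ C, I.card = ω) ∧
  (∀ I ∈ C, (1 : ZMod L) ∉ dstar I ∧ (-1 : ZMod L) ∉ dstar I) ∧
  ∀ I ∈ C, ∀ J ∈ C, I ≠ J → Disjoint (dplus I) (dplus J)

/-- `M_S(L,ω)`: the maximum size of an SCAC of length `L` and weight `ω`. -/
noncomputable def MS (L ω : ℕ) : ℕ :=
  sSup {n | ∃ C : Finset (Finset (ZMod L)), IsSCAC L ω C ∧ C.card = n}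

/-!
**Upper bound.** The set `d⁺(I)` avoids `0` and `1`, is stable under `x ↦ 1 - x`, and contains more
elements than `d*(I) = {±a, ±b, ±c}`, where `a + b + c = 0`. For `L ≡ 6 (mod 12)` this forces
`|d⁺(I)| ≥ 8` unless `d*(I)` contains an element `±w` of order three, when still `|d⁺(I)| ≥ 4`.
Since `±w` are the only such elements, at most one codeword is of the latter kind, hence
`8 (|C| - 1) + 4 + 2 ≤ L`.

**Lower bound.** Doubling embeds `ℤ_N` as the even residues of `ℤ_{2N}` and turns codes whose
difference sets `d*` are disjoint into strongly conflict-avoiding ones. In `ℤ_N`, the codeword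
`{-a, 0, a}` has differences `±a, ±2a`, so one wants to choose every other element along each cycle
of `x ↦ 2x` on `ℤ_N / ±1`. This is possible because a cycle of odd length `j` satisfies `4^j x = x`,
and `gcd(N, 4^j - 1) = 3` then leaves only the elements of order three.
-/

section ZModTorsion

variable {L : ℕ}

lemma natCast_mul_ne_one {d : ℕ} (hd : 1 < d) (hdL : d ∣ L) (x : ZMod L) :
    (d : ZMod L) * x ≠ 1 := by
  intro h
  have : Fact (1 < d) := ⟨hd⟩
  have hmod := congrArg (ZMod.castHom hdL (ZMod d)) h
  rw [map_mul, map_natCast, ZMod.natCast_self, zero_mul, map_one] at hmod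
  exact zero_ne_one hmod

lemma gcd_mul_eq_zero {n : ℕ} {x : ZMod L} (h : (n : ZMod L) * x = 0) :
    (L.gcd n : ZMod L) * x = 0 := by
  rw [← nsmul_eq_mul] at h ⊢
  exact gcd_nsmul_eq_zero.2 ⟨by simp, h⟩

lemma three_mul_eq_zero_of_four_pow_mul_eq {j : ℕ} (hgcd : L.gcd (4 ^ j - 1) = 3) {x : ZMod L}
    (h : 4 ^ j * x = x) : 3 * x = 0 := by
  have hsub : ((4 ^ j - 1 : ℕ) : ZMod L) * x = 0 := by
    rw [Nat.cast_sub (Nat.one_le_pow _ _ (by simp))]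
    push_cast
    linear_combination h
  have := gcd_mul_eq_zero hsub
  rw [hgcd] at this
  exact_mod_cast this

lemma exists_eq_natCast_mul_of_mul_eq_zero [NeZero L] {d m : ℕ} (hL : L = d * m) {x : ZMod L}
    (h : (d : ZMod L) * x = 0) : ∃ k < d, x = k * m := by
  subst hL
  have hd : 0 < d := Nat.pos_of_mul_pos_right (NeZero.pos (d * m))
  have hdvd : d * m ∣ d * x.val := by
    rw [← ZMod.natCast_eq_zero_iff]
    simpa using h
  obtain ⟨k, hk⟩ := Nat.dvd_of_mul_dvd_mul_left hd hdvd
  have hlt : m * k < m * d := by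
    rw [← hk, mul_comm m]
    exact x.val_lt
  refine ⟨k, lt_of_mul_lt_mul_left' hlt, ?_⟩
  rw [← ZMod.natCast_zmod_val x, hk]
  push_cast
  ring

lemma two_mul_eq_zero_of_four_mul_eq_zero (h2 : 2 ∣ L) (h4 : ¬ 4 ∣ L) {x : ZMod L}
    (h : 4 * x = 0) : 2 * x = 0 := by
  have hgcd : L.gcd 4 = 2 := by
    have hL : L % 4 = 2 := by omega
    rw [Nat.gcd_comm, Nat.gcd_rec, hL]
    rfl
  have := gcd_mul_eq_zero (n := 4) (mod_cast h)
  rw [hgcd] at this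
  exact_mod_cast this

lemma eq_of_two_mul_eq_zero [NeZero L] (h2 : 2 ∣ L) {x y : ZMod L} (hx : 2 * x = 0)
    (hy : 2 * y = 0) (hx0 : x ≠ 0) (hy0 : y ≠ 0) : x = y := by
  obtain ⟨m, hm⟩ := h2
  obtain ⟨i, hi, rfl⟩ := exists_eq_natCast_mul_of_mul_eq_zero hm (mod_cast hx)
  obtain ⟨j, hj, rfl⟩ := exists_eq_natCast_mul_of_mul_eq_zero hm (mod_cast hy)
  interval_cases i <;> interval_cases j <;> simp_all

lemma exists_three_torsion_generator [NeZero L] (h3 : 3 ∣ L) :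
    ∃ w : ZMod L, w ≠ 0 ∧ 3 * w = 0 ∧ ∀ x : ZMod L, 3 * x = 0 → x ≠ 0 → x = w ∨ x = -w := by
  obtain ⟨m, hm⟩ := h3
  have hL := NeZero.ne L
  have hw : (3 : ZMod L) * m = 0 := by
    have : ((3 * m : ℕ) : ZMod L) = 0 := by rw [← hm, ZMod.natCast_self]
    exact_mod_cast this
  refine ⟨m, ?_, hw, fun x hx hx0 => ?_⟩
  · rw [Ne, ZMod.natCast_eq_zero_iff]
    exact Nat.not_dvd_of_pos_of_lt (by omega) (by omega)
  · obtain ⟨k, hk, rfl⟩ := exists_eq_natCast_mul_of_mul_eq_zero hm (mod_cast hx)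
    interval_cases k
    · simp at hx0
    · simp
    · right
      push_cast
      linear_combination hw

end ZModTorsion

lemma even_card_of_involution {α : Type*} {s : Finset α} (f : α → α) (hs : ∀ x ∈ s, f x ∈ s)
    (hff : ∀ x ∈ s, f (f x) = x) (hf : ∀ x ∈ s, f x ≠ x) : Even #s := by
  have hsum : ∑ _x ∈ s, (1 : ZMod 2) = 0 :=
    sum_involution (fun x _ => f x) (fun _ _ => by decide) (fun x hx _ => hf x hx) hs hff
  rwa [sum_const, nsmul_one, ZMod.natCast_eq_zero_iff, ← even_iff_two_dvd] at hsum

section ShiftUnion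

variable {L : ℕ}

/-- The set `D ∪ (D + 1)`, so that `d⁺(I)` is `shiftUnion (d*(I))`. -/
def shiftUnion (D : Finset (ZMod L)) : Finset (ZMod L) := D ∪ D.image (· + 1)

lemma mem_shiftUnion {D : Finset (ZMod L)} {x : ZMod L} :
    x ∈ shiftUnion D ↔ x ∈ D ∨ x - 1 ∈ D := by
  simp [shiftUnion, sub_eq_add_neg]

lemma even_card_shiftUnion (h2 : 2 ∣ L) {D : Finset (ZMod L)} (hneg : ∀ x ∈ D, -x ∈ D) :
    Even #(shiftUnion D) := by
  refine even_card_of_involution (1 - ·) (fun x hx => ?_) (fun x _ => sub_sub_cancel 1 x)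
    fun x _ hx => ?_
  · rw [mem_shiftUnion] at hx ⊢
    rcases hx with hx | hx
    · right
      simpa using hneg x hx
    · left
      simpa using hneg _ hx
  · refine natCast_mul_ne_one one_lt_two h2 x ?_
    push_cast
    linear_combination -hx

lemma card_lt_card_shiftUnion [NeZero L] {D : Finset (ZMod L)} (h0 : 0 ∉ D) (hD : D.Nonempty) :
    #D < #(shiftUnion D) := by
  refine card_lt_card (subset_union_left.ssubset_of_ne fun heq => h0 ?_)
  have hsucc : ∀ x ∈ D, x + 1 ∈ D := fun x hx => by
    rw [heq]
    exact mem_union_right _ (mem_image_of_mem _ hx)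
  obtain ⟨x, hx⟩ := hD
  have hadd : ∀ n : ℕ, x + n ∈ D := fun n => by
    induction n with
    | zero => simpa using hx
    | succ n ih => simpa [add_assoc] using hsucc _ ih
  simpa using hadd (-x).val

lemma card_shiftUnion_of_add_one_notMem {D : Finset (ZMod L)} (h : ∀ x ∈ D, x + 1 ∉ D) :
    #(shiftUnion D) = 2 * #D := by
  have hdisj : Disjoint D (D.image (· + 1)) := by
    rw [disjoint_right, forall_mem_image]
    exact h
  rw [shiftUnion, card_union_of_disjoint hdisj, card_image_of_injective _ (add_left_injective 1),
    two_mul]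

lemma card_add_two_le_card_shiftUnion [NeZero L] {D : Finset (ZMod L)} {h : ZMod L} (h0 : 0 ∉ D)
    (hD : h ∈ D) (hcard : 1 < #D) (hpred : h - 1 ∉ D) (hsucc : h + 1 ∉ D) :
    #D + 2 ≤ #(shiftUnion D) := by
  have hrest : (D.erase h).Nonempty := (erase_nonempty hD).2 (one_lt_card_iff_nontrivial.1 hcard)
  have hlt := card_lt_card_shiftUnion (fun h' => h0 (mem_of_mem_erase h')) hrest
  have hne : h ≠ h + 1 := fun heq => hsucc (heq ▸ hD)
  have hdisj : Disjoint {h, h + 1} (shiftUnion (D.erase h)) := by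
    simp [disjoint_insert_left, mem_shiftUnion, hpred, hsucc]
  have hsub : {h, h + 1} ∪ shiftUnion (D.erase h) ⊆ shiftUnion D := by
    intro x
    simp only [mem_union, mem_insert, mem_singleton, mem_shiftUnion, mem_erase]
    grind
  have hle := card_le_card hsub
  rw [card_union_of_disjoint hdisj, card_pair hne] at hle
  rw [card_erase_of_mem hD] at hlt
  omega

end ShiftUnion

section Differences

variable {L : ℕ} {I : Finset (ZMod L)} {x : ZMod L}

lemma mem_dstar : x ∈ dstar I ↔ x ≠ 0 ∧ ∃ u ∈ I, ∃ v ∈ I, u - v = x := by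
  simp only [dstar, dset, mem_sdiff, mem_image, mem_product, mem_singleton, Prod.exists]
  grind

lemma zero_notMem_dstar : 0 ∉ dstar I := fun h => (mem_dstar.1 h).1 rfl

lemma neg_mem_dstar (h : x ∈ dstar I) : -x ∈ dstar I := by
  obtain ⟨hx, u, hu, v, hv, rfl⟩ := mem_dstar.1 h
  exact mem_dstar.2 ⟨neg_ne_zero.2 hx, v, hv, u, hu, (neg_sub u v).symm⟩

lemma dplus_eq_shiftUnion (I : Finset (ZMod L)) : dplus I = shiftUnion (dstar I) := rfl

lemma mem_dplus : x ∈ dplus I ↔ x ∈ dstar I ∨ x - 1 ∈ dstar I := mem_shiftUnion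

lemma dstar_subset_dplus (I : Finset (ZMod L)) : dstar I ⊆ dplus I := subset_union_left

lemma even_card_dplus (h2 : 2 ∣ L) (I : Finset (ZMod L)) : Even #(dplus I) :=
  even_card_shiftUnion h2 fun _ => neg_mem_dstar

lemma card_le_card_dstar_add_one (I : Finset (ZMod L)) : #I ≤ #(dstar I) + 1 := by
  rcases I.eq_empty_or_nonempty with rfl | ⟨v, hv⟩
  · simp
  have hsub : (I.erase v).image (· - v) ⊆ dstar I := by
    simp only [subset_iff, forall_mem_image, mem_erase, mem_dstar]
    exact fun u hu => ⟨sub_ne_zero.2 hu.1, u, hu.2, v, hv, rfl⟩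
  have hle := card_le_card hsub
  rw [card_image_of_injective _ sub_left_injective, card_erase_of_mem hv] at hle
  omega

lemma four_le_card_dplus [NeZero L] (h2 : 2 ∣ L) (hI : 3 ≤ #I) : 4 ≤ #(dplus I) := by
  have hdstar := card_le_card_dstar_add_one I
  have hlt : #(dstar I) < #(dplus I) :=
    card_lt_card_shiftUnion zero_notMem_dstar (card_pos.1 (by omega))
  obtain ⟨k, hk⟩ := even_card_dplus h2 I
  omega

end Differences

section SignedTriple

variable {L : ℕ} {a b c : ZMod L}

/-- The set `{±a, ±b, ±c}`. For `a + b + c = 0` these are the nonzero difference sets of codewords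
of weight three. -/
def signedTriple (a b c : ZMod L) : Finset (ZMod L) := {a, -a, b, -b, c, -c}

lemma mem_signedTriple {x : ZMod L} :
    x ∈ signedTriple a b c ↔ x = a ∨ x = -a ∨ x = b ∨ x = -b ∨ x = c ∨ x = -c := by
  simp [signedTriple]

lemma signedTriple_rotate (a b c : ZMod L) : signedTriple a b c = signedTriple b c a := by
  ext x
  simp only [mem_signedTriple]
  tauto

lemma neg_mem_signedTriple {x : ZMod L} (hx : x ∈ signedTriple a b c) :
    -x ∈ signedTriple a b c := by
  simp only [mem_signedTriple] at hx ⊢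
  grind

lemma dstar_eq_signedTriple {x y z : ZMod L} (hxy : x ≠ y) (hxz : x ≠ z) (hyz : y ≠ z) :
    dstar {x, y, z} = signedTriple (x - y) (y - z) (z - x) := by
  ext w
  simp only [mem_dstar, mem_signedTriple, mem_insert, mem_singleton, exists_eq_or_imp,
    exists_eq_left, neg_sub]
  grind

lemma eight_le_card_shiftUnion_of_card_eq_six [NeZero L] (h2 : 2 ∣ L)
    (h0 : 0 ∉ signedTriple a b c) (hcard : #(signedTriple a b c) = 6) :
    8 ≤ #(shiftUnion (signedTriple a b c)) := by
  have hlt := card_lt_card_shiftUnion h0 (card_pos.1 (by omega))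
  obtain ⟨k, hk⟩ := even_card_shiftUnion h2 fun x (hx : x ∈ signedTriple a b c) =>
    neg_mem_signedTriple hx
  omega

lemma eight_le_card_shiftUnion_of_two_mul_eq_zero [NeZero L] (h2 : 2 ∣ L) (h4 : ¬ 4 ∣ L)
    (habc : a + b + c = 0) (h0 : 0 ∉ signedTriple a b c) (h1 : 1 ∉ signedTriple a b c)
    (ha : 2 * a = 0) : 8 ≤ #(shiftUnion (signedTriple a b c)) := by
  have hne := h0
  have hone := h1
  simp only [mem_signedTriple, not_or] at hne hone
  have hb : 2 * b ≠ 0 := fun hb => by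
    have := eq_of_two_mul_eq_zero h2 ha hb
    grind
  have hb' : 4 * b ≠ 0 := fun h => hb (two_mul_eq_zero_of_four_mul_eq_zero h2 h4 h)
  have hcard : #(signedTriple a b c) = 5 := by
    have hshape : signedTriple a b c = {a, b, -b, c, -c} := by
      ext x
      simp only [mem_signedTriple, mem_insert, mem_singleton]
      grind
    rw [hshape]
    repeat rw [card_insert_of_notMem]
    · simp
    all_goals simp only [mem_insert, mem_singleton]; grind
  -- `a ± 1 ∈ {±b, ±c}` would give `1 ∈ {±c, ±b}`, because `a = -a`.
  have hpred : a - 1 ∉ signedTriple a b c := by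
    simp only [mem_signedTriple]
    grind
  have hsucc : a + 1 ∉ signedTriple a b c := by
    simp only [mem_signedTriple]
    grind
  have hle := card_add_two_le_card_shiftUnion h0 (mem_signedTriple.2 (Or.inl rfl)) (by omega)
    hpred hsucc
  obtain ⟨k, hk⟩ := even_card_shiftUnion h2 fun x (hx : x ∈ signedTriple a b c) =>
    neg_mem_signedTriple hx
  omega

lemma eight_le_card_shiftUnion_of_eq (h2 : 2 ∣ L) (h3 : 3 ∣ L) (h4 : ¬ 4 ∣ L)
    (habc : a + b + c = 0) (h1 : 1 ∉ signedTriple a b c) (h2a : 2 * a ≠ 0) (h3a : 3 * a ≠ 0)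
    (hab : a = b) : 8 ≤ #(shiftUnion (signedTriple a b c)) := by
  have h4a : 4 * a ≠ 0 := fun h => h2a (two_mul_eq_zero_of_four_mul_eq_zero h2 h4 h)
  have htwo (x : ZMod L) : 2 * x ≠ 1 := mod_cast natCast_mul_ne_one one_lt_two h2 x
  have hthree (x : ZMod L) : 3 * x ≠ 1 := mod_cast natCast_mul_ne_one (by simp) h3 x
  have hshape : signedTriple a b c = {a, -a, 2 * a, -(2 * a)} := by
    ext x
    simp only [mem_signedTriple, mem_insert, mem_singleton]
    grind
  have hcard : #(signedTriple a b c) = 4 := by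
    rw [hshape]
    repeat rw [card_insert_of_notMem]
    · simp
    all_goals simp only [mem_insert, mem_singleton]; grind
  have hsucc : ∀ x ∈ signedTriple a b c, x + 1 ∉ signedTriple a b c := by
    have := htwo a
    have := htwo (-a)
    have := htwo (2 * a)
    have := htwo (-(2 * a))
    have := hthree a
    have := hthree (-a)
    rw [hshape] at h1 ⊢
    simp only [mem_insert, mem_singleton] at h1 ⊢
    grind
  rw [card_shiftUnion_of_add_one_notMem hsucc, hcard]

lemma eight_le_card_shiftUnion_signedTriple [NeZero L] (h2 : 2 ∣ L) (h3 : 3 ∣ L) (h4 : ¬ 4 ∣ L)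
    (habc : a + b + c = 0) (h0 : 0 ∉ signedTriple a b c) (h1 : 1 ∉ signedTriple a b c)
    (htorsion : ∀ x ∈ signedTriple a b c, 3 * x ≠ 0) :
    8 ≤ #(shiftUnion (signedTriple a b c)) := by
  have rot₁ := signedTriple_rotate a b c
  have rot₂ := rot₁.trans (signedTriple_rotate b c a)
  have hbca : b + c + a = 0 := by linear_combination habc
  have hcab : c + a + b = 0 := by linear_combination habc
  have h3a : 3 * a ≠ 0 := htorsion a (by simp [mem_signedTriple])
  have h3b : 3 * b ≠ 0 := htorsion b (by simp [mem_signedTriple])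
  have h3c : 3 * c ≠ 0 := htorsion c (by simp [mem_signedTriple])
  by_cases h2a : 2 * a = 0
  · exact eight_le_card_shiftUnion_of_two_mul_eq_zero h2 h4 habc h0 h1 h2a
  by_cases h2b : 2 * b = 0
  · rw [rot₁] at h0 h1 ⊢
    exact eight_le_card_shiftUnion_of_two_mul_eq_zero h2 h4 hbca h0 h1 h2b
  by_cases h2c : 2 * c = 0
  · rw [rot₂] at h0 h1 ⊢
    exact eight_le_card_shiftUnion_of_two_mul_eq_zero h2 h4 hcab h0 h1 h2c
  by_cases hab : a = b
  · exact eight_le_card_shiftUnion_of_eq h2 h3 h4 habc h1 h2a h3a hab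
  by_cases hbc : b = c
  · rw [rot₁] at h1 ⊢
    exact eight_le_card_shiftUnion_of_eq h2 h3 h4 hbca h1 h2b h3b hbc
  by_cases hca : c = a
  · rw [rot₂] at h1 ⊢
    exact eight_le_card_shiftUnion_of_eq h2 h3 h4 hcab h1 h2c h3c hca
  refine eight_le_card_shiftUnion_of_card_eq_six h2 h0 ?_
  simp only [mem_signedTriple, not_or] at h0
  rw [signedTriple]
  repeat rw [card_insert_of_notMem]
  · simp
  all_goals simp only [mem_insert, mem_singleton]; grind

end SignedTriple

section UpperBound

variable {L : ℕ}

lemma eight_le_card_dplus [NeZero L] (h2 : 2 ∣ L) (h3 : 3 ∣ L) (h4 : ¬ 4 ∣ L)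
    {I : Finset (ZMod L)} (hI : #I = 3) (h1 : 1 ∉ dstar I) (htorsion : ∀ x ∈ dstar I, 3 * x ≠ 0) :
    8 ≤ #(dplus I) := by
  obtain ⟨x, y, z, hxy, hxz, hyz, rfl⟩ := card_eq_three.1 hI
  have h0 := zero_notMem_dstar (I := {x, y, z})
  rw [dplus_eq_shiftUnion]
  rw [dstar_eq_signedTriple hxy hxz hyz] at *
  exact eight_le_card_shiftUnion_signedTriple h2 h3 h4 (by ring) h0 h1 htorsion

lemma IsSCAC.sum_card_dplus_add_two_le [NeZero L] (hL : 1 < L) {ω : ℕ}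
    {C : Finset (Finset (ZMod L))} (hC : IsSCAC L ω C) : ∑ I ∈ C, #(dplus I) + 2 ≤ L := by
  obtain ⟨-, hone, hdisj⟩ := hC
  have : Fact (1 < L) := ⟨hL⟩
  have havoid : Disjoint (C.biUnion dplus) {0, 1} := by
    refine (disjoint_biUnion_left _ _ _).2 fun I hI => ?_
    simp only [disjoint_insert_right, disjoint_singleton_right, mem_dplus, zero_sub, sub_self,
      not_or]
    exact ⟨⟨zero_notMem_dstar, (hone I hI).2⟩, (hone I hI).1, zero_notMem_dstar⟩
  calc ∑ I ∈ C, #(dplus I) + 2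
      = #(C.biUnion dplus ∪ {0, 1}) := by
        rw [card_union_of_disjoint havoid, card_biUnion hdisj, card_pair zero_ne_one]
    _ ≤ #(univ : Finset (ZMod L)) := card_le_univ _
    _ = L := ZMod.card L

theorem IsSCAC.eight_mul_card_le [NeZero L] (h2 : 2 ∣ L) (h3 : 3 ∣ L) (h4 : ¬ 4 ∣ L)
    {C : Finset (Finset (ZMod L))} (hC : IsSCAC L 3 C) : 8 * #C ≤ L + 2 := by
  obtain ⟨w, -, -, htorsion⟩ := exists_three_torsion_generator h3
  have hsum := hC.sum_card_dplus_add_two_le (by have := Nat.le_of_dvd (NeZero.pos L) h2; omega)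
  obtain ⟨hcard, hone, hdisj⟩ := hC
  have hexceptional : #{I ∈ C | w ∈ dstar I} ≤ 1 := by
    simp only [card_le_one, mem_filter]
    rintro I ⟨hI, hwI⟩ J ⟨hJ, hwJ⟩
    by_contra hne
    exact disjoint_left.1 (hdisj I hI J hJ hne) (dstar_subset_dplus I hwI)
      (dstar_subset_dplus J hwJ)
  have hbound : ∀ I ∈ C, 8 ≤ #(dplus I) + if w ∈ dstar I then 4 else 0 := by
    intro I hI
    split_ifs with hw
    · have := four_le_card_dplus h2 (hcard I hI).ge
      omega
    · refine eight_le_card_dplus h2 h3 h4 (hcard I hI) (hone I hI).1 fun x hx h3x => hw ?_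
      rcases htorsion x h3x (mem_dstar.1 hx).1 with rfl | rfl
      · exact hx
      · simpa using neg_mem_dstar hx
  have hle := sum_le_sum hbound
  rw [sum_const, smul_eq_mul, sum_add_distrib, ← sum_filter, sum_const, smul_eq_mul] at hle
  omega

end UpperBound

section DoublingGraph

variable {R : Type*} [CommRing R]

/-- The graph on the elements `x` of `R` with `3x ≠ 0` in which `x` is joined to `±2x`. -/
def doublingGraph (R : Type*) [CommRing R] : SimpleGraph R where
  Adj x y := 3 * x ≠ 0 ∧ 3 * y ≠ 0 ∧ ((y = 2 * x ∨ y = -(2 * x)) ∨ (x = 2 * y ∨ x = -(2 * y)))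
  symm := ⟨by tauto⟩
  loopless := ⟨by grind⟩

lemma exists_two_pow_mul_eq_of_walk {x y : R} (p : (doublingGraph R).Walk x y) :
    ∃ i j : ℕ, (Even (i + j) ↔ Even p.length) ∧
      (2 ^ i * x = 2 ^ j * y ∨ 2 ^ i * x = -(2 ^ j * y)) := by
  induction p with
  | nil => exact ⟨0, 0, by simp⟩
  | cons hadj p ih =>
    obtain ⟨i, j, hpar, hij⟩ := ih
    rw [SimpleGraph.Walk.length_cons]
    rcases hadj.2.2 with h | h
    · refine ⟨i + 1, j, by grind, ?_⟩
      rw [pow_succ]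
      grind
    · refine ⟨i, j + 1, by grind, ?_⟩
      rw [pow_succ]
      grind

/-- A set of elements of `R` that, away from the `3`-torsion, is symmetric and contains exactly one
of `x` and `2x`. -/
def IsAlternating (T : Set R) : Prop :=
  ∀ x : R, 3 * x ≠ 0 → (-x ∈ T ↔ x ∈ T) ∧ (2 * x ∈ T ↔ x ∉ T)

lemma eq_of_four_pow_mul_eq {i j : ℕ} {x : R} (h2 : IsUnit (2 : R)) (hij : i ≤ j)
    (h : 4 ^ i * x = 4 ^ j * x) : 4 ^ (j - i) * x = x := by
  have h4 : IsUnit (4 : R) := by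
    have := h2.mul h2
    norm_num at this
    exact this
  rw [← (h4.pow i).mul_right_inj, ← mul_assoc, ← pow_add, Nat.add_sub_cancel' hij, h]

lemma even_length_of_loop (h2 : IsUnit (2 : R))
    (hodd : ∀ j, Odd j → ∀ x : R, 4 ^ j * x = x → 3 * x = 0) {x : R}
    (p : (doublingGraph R).Walk x x) : Even p.length := by
  by_contra hp
  have h3 : 3 * x ≠ 0 := by
    cases p with
    | nil => simp at hp
    | cons hadj _ => exact hadj.1
  obtain ⟨i, j, hpar, hij⟩ := exists_two_pow_mul_eq_of_walk p
  rw [← hpar, Nat.not_even_iff_odd] at hp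
  -- Multiplication by `2 ^ i` sends `x` to `±2 ^ j x`; apply it twice.
  have hfour : 4 ^ i * x = 4 ^ j * x := by
    have hpow (n : ℕ) : (4 : R) ^ n = 2 ^ n * 2 ^ n := by rw [← mul_pow]; norm_num
    rw [hpow, hpow]
    rcases hij with hij | hij
    · linear_combination (2 ^ i + 2 ^ j) * hij
    · linear_combination (2 ^ i - 2 ^ j) * hij
  rcases le_total i j with hle | hle
  · exact h3 (hodd _ (by grind) x (eq_of_four_pow_mul_eq h2 hle hfour))
  · exact h3 (hodd _ (by grind) x (eq_of_four_pow_mul_eq h2 hle hfour.symm))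

theorem exists_isAlternating (h2 : IsUnit (2 : R))
    (hodd : ∀ j, Odd j → ∀ x : R, 4 ^ j * x = x → 3 * x = 0) : ∃ T : Set R, IsAlternating T := by
  have hcol : (doublingGraph R).Colorable 2 :=
    SimpleGraph.two_colorable_iff_forall_loop_even.2 fun _ => even_length_of_loop h2 hodd
  let color : (doublingGraph R).Coloring Bool := hcol.toColoring (by simp)
  refine ⟨{x | color x = true}, fun x hx => ?_⟩
  have h3 : 3 * (2 * x) ≠ 0 := by rwa [mul_left_comm, Ne, h2.mul_right_eq_zero]
  have hdouble := color.valid (v := x) (w := 2 * x) ⟨hx, h3, by simp⟩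
  have hneg := color.valid (v := -x) (w := 2 * x) ⟨by simpa using hx, h3, by simp⟩
  simp only [Set.mem_ofPred_eq]
  grind

end DoublingGraph

section Doubling

variable {N M : ℕ}

/-- A conflict-avoiding code of length `N` and weight `ω`: only the unshifted difference sets `d*`
of its codewords have to be disjoint. -/
def IsCAC (N ω : ℕ) (C : Finset (Finset (ZMod N))) : Prop :=
  (∀ I ∈ C, #I = ω) ∧ ∀ I ∈ C, ∀ J ∈ C, I ≠ J → Disjoint (dstar I) (dstar J)

/-- The embedding `x ↦ 2x` of `ℤ_N` into `ℤ_{2N}`, with image the even residues. -/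
def double (N : ℕ) : ZMod N →+ ZMod (2 * N) :=
  ZMod.lift N ⟨(AddMonoidHom.mulLeft 2).comp (Int.castAddHom (ZMod (2 * N))), by
    have h := ZMod.natCast_self (2 * N)
    push_cast at h
    simpa using h⟩

lemma double_intCast (k : ℤ) : double N k = 2 * k := ZMod.lift_coe N _ k

lemma double_injective (N : ℕ) : Function.Injective (double N) := by
  refine (ZMod.lift_injective N).2 fun k hk => ?_
  have hk' : ((2 * k : ℤ) : ZMod (2 * N)) = 0 := by simpa using hk
  rw [ZMod.intCast_zmod_eq_zero_iff_dvd] at hk' ⊢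
  push_cast at hk'
  exact Int.dvd_of_mul_dvd_mul_left two_ne_zero hk'

lemma double_ne_one (x : ZMod N) : double N x ≠ 1 := by
  obtain ⟨k, rfl⟩ := ZMod.intCast_surjective x
  rw [double_intCast]
  exact_mod_cast natCast_mul_ne_one one_lt_two (dvd_mul_right 2 N) (k : ZMod (2 * N))

lemma dstar_image {f : ZMod N →+ ZMod M} (hf : Function.Injective f) (I : Finset (ZMod N)) :
    dstar (I.image f) = (dstar I).image f := by
  ext x
  simp only [mem_dstar, mem_image]
  constructor
  · rintro ⟨hx, _, ⟨u, hu, rfl⟩, _, ⟨v, hv, rfl⟩, rfl⟩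
    refine ⟨u - v, ⟨fun h => hx ?_, u, hu, v, hv, rfl⟩, map_sub f u v⟩
    rw [← map_sub, h, map_zero]
  · rintro ⟨_, ⟨hx, u, hu, v, hv, rfl⟩, rfl⟩
    exact ⟨(map_ne_zero_iff f hf).2 hx, f u, ⟨u, hu, rfl⟩, f v, ⟨v, hv, rfl⟩, (map_sub f u v).symm⟩

lemma disjoint_dplus_image_double {I J : Finset (ZMod N)} (h : Disjoint (dstar I) (dstar J)) :
    Disjoint (dplus (I.image (double N))) (dplus (J.image (double N))) := by
  have hparity (u v : ZMod N) : double N u ≠ double N v + 1 := fun huv =>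
    double_ne_one (u - v) (by rw [map_sub, huv, add_sub_cancel_left])
  rw [disjoint_left]
  intro x
  simp only [mem_dplus, dstar_image (double_injective N), mem_image, eq_sub_iff_add_eq]
  rintro (⟨u, hu, rfl⟩ | ⟨u, hu, rfl⟩) (⟨v, hv, hvu⟩ | ⟨v, hv, hvu⟩)
  · exact disjoint_left.1 h hu (double_injective N hvu ▸ hv)
  · exact hparity u v hvu.symm
  · exact hparity v u hvu
  · exact disjoint_left.1 h hu (double_injective N (add_right_cancel hvu) ▸ hv)

theorem IsCAC.isSCAC_image_double {ω : ℕ} {C : Finset (Finset (ZMod N))} (hC : IsCAC N ω C) :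
    IsSCAC (2 * N) ω (C.image (image (double N))) := by
  obtain ⟨hcard, hdisj⟩ := hC
  have hodd (I : Finset (ZMod N)) : 1 ∉ dstar (I.image (double N)) := by
    rw [dstar_image (double_injective N), mem_image]
    rintro ⟨x, -, hx⟩
    exact double_ne_one x hx
  simp only [IsSCAC, forall_mem_image]
  refine ⟨fun I hI => ?_, fun I _ => ⟨hodd I, fun h => hodd I ?_⟩, fun I hI J hJ hne => ?_⟩
  · rw [card_image_of_injective _ (double_injective N), hcard I hI]
  · simpa using neg_mem_dstar h
  · exact disjoint_dplus_image_double (hdisj I hI J hJ fun h => hne (h ▸ rfl))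

end Doubling

section LowerBound

variable {N : ℕ}

/-- The equi-difference codeword of weight three with common difference `a`, centred at `0`. -/
def centeredCodeword (a : ZMod N) : Finset (ZMod N) := {-a, 0, a}

lemma mem_centeredCodeword {a x : ZMod N} : x ∈ centeredCodeword a ↔ x = -a ∨ x = 0 ∨ x = a := by
  simp [centeredCodeword]

lemma centeredCodeword_neg (a : ZMod N) : centeredCodeword (-a) = centeredCodeword a := by
  ext x
  simp only [mem_centeredCodeword, neg_neg]
  tauto

lemma card_centeredCodeword {a : ZMod N} (h : 2 * a ≠ 0) : #(centeredCodeword a) = 3 :=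
  card_eq_three.2 ⟨-a, 0, a, by grind, by grind, by grind, rfl⟩

lemma mem_dstar_centeredCodeword {a x : ZMod N} (h : x ∈ dstar (centeredCodeword a)) :
    (x = a ∨ x = -a) ∨ x = 2 * a ∨ x = -(2 * a) := by
  obtain ⟨h0, u, hu, v, hv, rfl⟩ := mem_dstar.1 h
  rw [mem_centeredCodeword] at hu hv
  grind

lemma card_le_two_mul_card_image_centeredCodeword {S : Finset (ZMod N)} (h0 : 0 ∉ S) :
    #S ≤ 2 * #(S.image centeredCodeword) := by
  refine card_le_mul_card_image S 2 (forall_mem_image.2 fun a _ => ?_)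
  refine (card_le_card (t := {a, -a}) fun b hb => ?_).trans card_le_two
  obtain ⟨hbS, hba⟩ := mem_filter.1 hb
  have hb0 : b ≠ 0 := fun h => h0 (h ▸ hbS)
  have hmem : b ∈ centeredCodeword a := hba ▸ mem_centeredCodeword.2 (by simp)
  rw [mem_centeredCodeword] at hmem
  simp only [mem_insert, mem_singleton]
  tauto

variable [NeZero N] {T : Set (ZMod N)}

open Classical in
/-- The common differences of the codewords built from an alternating set `T`: its elements off the
`3`-torsion, together with all elements of order three. -/
noncomputable def multipliers (T : Set (ZMod N)) : Finset (ZMod N) :=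
  {x | x ≠ 0 ∧ (3 * x ≠ 0 → x ∈ T)}

lemma mem_multipliers {x : ZMod N} : x ∈ multipliers T ↔ x ≠ 0 ∧ (3 * x ≠ 0 → x ∈ T) := by
  simp [multipliers]

namespace IsAlternating

lemma neg_mem_multipliers (hT : IsAlternating T) {x : ZMod N} (hx : x ∈ multipliers T) :
    -x ∈ multipliers T := by
  rw [mem_multipliers] at hx ⊢
  refine ⟨neg_ne_zero.2 hx.1, fun h3 => ?_⟩
  rw [mul_neg, neg_ne_zero] at h3
  exact (hT x h3).1.2 (hx.2 h3)

lemma eq_or_eq_neg_of_eq_two_mul (hT : IsAlternating T) (h2 : IsUnit (2 : ZMod N)) {a b : ZMod N}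
    (ha : a ∈ multipliers T) (hb : b ∈ multipliers T) (hab : a = 2 * b ∨ a = -(2 * b)) :
    a = b ∨ a = -b := by
  wlog hpos : a = 2 * b generalizing b
  · have := this (hT.neg_mem_multipliers hb) (by simpa [or_comm] using hab) (by grind)
    simpa [or_comm] using this
  by_cases h3 : 3 * b = 0
  · right
    linear_combination hpos + h3
  · have h3a : 3 * a ≠ 0 := by rwa [hpos, mul_left_comm, Ne, h2.mul_right_eq_zero]
    have hbT := (mem_multipliers.1 hb).2 h3
    have haT := (mem_multipliers.1 ha).2 h3a
    rw [hpos] at haT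
    exact absurd hbT ((hT b h3).2.1 haT)

lemma isCAC_image_multipliers (hT : IsAlternating T) (h2 : IsUnit (2 : ZMod N)) :
    IsCAC N 3 ((multipliers T).image centeredCodeword) := by
  simp only [IsCAC, forall_mem_image]
  refine ⟨fun a ha => card_centeredCodeword ?_, fun a ha b hb hne => ?_⟩
  · rw [Ne, h2.mul_right_eq_zero]
    exact (mem_multipliers.1 ha).1
  rw [disjoint_left]
  intro x hxa hxb
  suffices a = b ∨ a = -b by
    rcases this with rfl | rfl
    · exact hne rfl
    · exact hne (centeredCodeword_neg b)
  have hsep := hT.eq_or_eq_neg_of_eq_two_mul h2 ha hb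
  have hsep' := hT.eq_or_eq_neg_of_eq_two_mul h2 hb ha
  have hcancel : 2 * a = 2 * b → a = b := h2.mul_left_cancel
  have hcancel' : 2 * a = 2 * -b → a = -b := h2.mul_left_cancel
  have hxa' := mem_dstar_centeredCodeword hxa
  have hxb' := mem_dstar_centeredCodeword hxb
  clear * - hsep hsep' hcancel hcancel' hxa' hxb'
  grind

lemma exists_mem_multipliers (hT : IsAlternating T) (h2 : IsUnit (2 : ZMod N)) {x : ZMod N}
    (hx : x ≠ 0) : x ∈ multipliers T ∨ ∃ u ∈ multipliers T, 2 * u = x := by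
  by_contra! hcon
  obtain ⟨u, rfl⟩ := h2.dvd (a := x)
  have h3 : 3 * u ≠ 0 := fun h3 => by
    refine hcon.1 (mem_multipliers.2 ⟨hx, fun h => absurd ?_ h⟩)
    rw [mul_left_comm, h3, mul_zero]
  have hu : u ∉ T := fun hu => hcon.2 u
    (mem_multipliers.2 ⟨fun h => hx (by rw [h, mul_zero]), fun _ => hu⟩) rfl
  exact hcon.1 (mem_multipliers.2 ⟨hx, fun _ => (hT u h3).2.2 hu⟩)

lemma succ_le_two_mul_card_multipliers (hT : IsAlternating T) (h2 : IsUnit (2 : ZMod N))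
    (h3 : 3 ∣ N) : N + 1 ≤ 2 * #(multipliers T) := by
  obtain ⟨w, hw0, hw3, -⟩ := exists_three_torsion_generator h3
  have hw : w ∈ multipliers T := mem_multipliers.2 ⟨hw0, fun h => absurd hw3 h⟩
  have hw' : -w ∈ multipliers T := hT.neg_mem_multipliers hw
  have hne : w ≠ -w := fun h => hw0 (by linear_combination hw3 - h)
  have hcover : univ.erase 0 ⊆ multipliers T ∪ (multipliers T).image (2 * ·) := by
    intro x hx
    rw [mem_union, mem_image]
    exact hT.exists_mem_multipliers h2 (ne_of_mem_erase hx)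
  have hoverlap : {w, -w} ⊆ multipliers T ∩ (multipliers T).image (2 * ·) := by
    simp only [insert_subset_iff, singleton_subset_iff, mem_inter, mem_image]
    exact ⟨⟨hw, -w, hw', by linear_combination -hw3⟩, hw', w, hw, by linear_combination hw3⟩
  have hcover_card := card_le_card hcover
  have hoverlap_card := card_le_card hoverlap
  have hinclexcl := card_union_add_card_inter (multipliers T) ((multipliers T).image (2 * ·))
  have himage := card_image_le (s := multipliers T) (f := (2 * ·))
  rw [card_erase_of_mem (mem_univ _), card_univ, ZMod.card] at hcover_card
  rw [card_pair hne] at hoverlap_card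
  omega

end IsAlternating

end LowerBound

theorem exists_isSCAC_succ_le_four_mul_card {N : ℕ} (hN : Odd N)
    (hgcd : ∀ j, Odd j → N.gcd (4 ^ j - 1) = 3) :
    ∃ C, IsSCAC (2 * N) 3 C ∧ N + 1 ≤ 4 * #C := by
  have : NeZero N := ⟨hN.pos.ne'⟩
  have h2 : IsUnit (2 : ZMod N) := mod_cast
    (ZMod.isUnit_iff_coprime 2 N).2 (Nat.coprime_two_left.2 hN)
  have h3 : 3 ∣ N := hgcd 1 odd_one ▸ N.gcd_dvd_left _
  obtain ⟨T, hT⟩ := exists_isAlternating h2 fun j hj _ =>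
    three_mul_eq_zero_of_four_pow_mul_eq (hgcd j hj)
  refine ⟨_, (hT.isCAC_image_multipliers h2).isSCAC_image_double, ?_⟩
  have h0 : 0 ∉ multipliers T := fun h => (mem_multipliers.1 h).1 rfl
  have hhalf := card_le_two_mul_card_image_centeredCodeword h0
  have hmul := hT.succ_le_two_mul_card_multipliers h2 h3
  rw [card_image_of_injective _ (image_injective (double_injective N))]
  omega

lemma MS_eq_of_isSCAC {L ω : ℕ} {C : Finset (Finset (ZMod L))} (hC : IsSCAC L ω C)
    (hmax : ∀ C', IsSCAC L ω C' → #C' ≤ #C) : MS L ω = #C := by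
  refine IsGreatest.csSup_eq ⟨⟨C, hC, rfl⟩, ?_⟩
  rintro _ ⟨C', hC', rfl⟩
  exact hmax C' hC'

/-- `hgcd` says that `3 ∣ N` and that `4` has even multiplicative order modulo every divisor of `N`
other than `1` and `3`. -/
theorem MS_eq_fermat_like_general {N : ℕ} (hN : Odd N)
    (hgcd : ∀ j, Odd j → N.gcd (4 ^ j - 1) = 3) : MS (2 * N) 3 = (N + 1) / 4 := by
  have : NeZero N := ⟨hN.pos.ne'⟩
  have h3 : 3 ∣ N := hgcd 1 odd_one ▸ N.gcd_dvd_left _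
  have hupper {C : Finset (Finset (ZMod (2 * N)))} (hC : IsSCAC (2 * N) 3 C) :
      8 * #C ≤ 2 * N + 2 :=
    hC.eight_mul_card_le (dvd_mul_right 2 N) (h3.mul_left 2) (by have := hN; grind)
  obtain ⟨C, hC, hlower⟩ := exists_isSCAC_succ_le_four_mul_card hN hgcd
  have hcard := hupper hC
  rw [MS_eq_of_isSCAC hC fun C' hC' => by have := hupper hC'; omega]
  omega

lemma gcd_two_pow_two_pow_sub_one_four_pow_sub_one {t j : ℕ} (ht : t ≠ 0) (hj : Odd j) :
    Nat.gcd (2 ^ 2 ^ t - 1) (4 ^ j - 1) = 3 := by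
  obtain ⟨s, rfl⟩ := Nat.exists_eq_succ_of_ne_zero ht
  have hexp : Nat.gcd (2 ^ (s + 1)) (2 * j) = 2 := by
    rw [pow_succ', Nat.gcd_mul_left, (Nat.coprime_two_left.2 hj).pow_left s]
  rw [show 4 ^ j = 2 ^ (2 * j) by rw [pow_mul]; norm_num, Nat.pow_sub_one_gcd_pow_sub_one, hexp]
  norm_num

theorem MS_eq_fermat_like (t L : ℕ) (ht : 2 ≤ t) (hL : L = 2 ^ (2 ^ t + 1) - 2) :
    MS L 3 = (L + 2) / 8 := by
  have hodd : Odd (2 ^ 2 ^ t - 1) :=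
    Nat.Even.sub_odd Nat.one_le_two_pow (even_two.pow_of_ne_zero (by simp)) odd_one
  obtain rfl : L = 2 * (2 ^ 2 ^ t - 1) := by rw [hL, pow_succ]; omega
  rw [MS_eq_fermat_like_general hodd fun j =>
    gcd_two_pow_two_pow_sub_one_four_pow_sub_one (by omega)]
  omega
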